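/- arXiv:1805.06778 — 3 statements merged into one kernel-verified Lean document; each statement's English description precedes it below -/
import Mathlib

section
/- Let X be a real Banach space with a Schauder basis (e_n). Then (e_n) satisfies ‖x − G_m(x)‖ ≤ σ̃^R_m(x) for all x ∈ X, all m ∈ ℕ, and every greedy ordering (i.e., it is 1-reverse partially greedy in the σ̃^R sense) if and only if for every x ∈ X, every greedy ordering for x, and every j > β_1(x), one has ‖x − G_1(x)‖ ≤ min(‖x‖, ‖x − e_j^*(x)e_j‖). -/
open Filter Topology

/-- A Schauder basis of a real normed space `X`, given by basis vectors `e n` together with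
biorthogonal (coordinate) functionals `f n`, such that every `x` is the limit of its
partial-sum expansion `∑_{n < N} f n x • e n`. -/
structure SchauderBasisSys (X : Type*) [NormedAddCommGroup X] [NormedSpace ℝ X] where
  e : ℕ → X
  f : ℕ → X →L[ℝ] ℝ
  biorth : ∀ m n : ℕ, f m (e n) = if m = n then (1 : ℝ) else 0
  expansion : ∀ x : X,
    Filter.Tendsto (fun N : ℕ => ∑ n ∈ Finset.range N, f n x • e n) Filter.atTop (nhds x)

namespace SchauderBasisSys

variable {X : Type*} [NormedAddCommGroup X] [NormedSpace ℝ X]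

/-- The coordinate projection onto a finite set `A` of indices: `P_A x = ∑_{i ∈ A} e_i^*(x) e_i`. -/
noncomputable def P (S : SchauderBasisSys X) (A : Finset ℕ) (x : X) : X :=
  ∑ i ∈ A, S.f i x • S.e i

/-- The indicator vector `1_A = ∑_{i ∈ A} e_i`. -/
noncomputable def ind (S : SchauderBasisSys X) (A : Finset ℕ) : X :=
  ∑ i ∈ A, S.e i

/-- A greedy ordering for `x`: an injection `ρ : ℕ → ℕ` whose range contains the support of `x`
and which rearranges the coordinates of `x` in nonincreasing order of absolute value. -/
def IsGreedyOrdering (S : SchauderBasisSys X) (x : X) (ρ : ℕ → ℕ) : Prop :=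
  Function.Injective ρ ∧ (∀ n : ℕ, S.f n x ≠ 0 → n ∈ Set.range ρ) ∧
    ∀ j k : ℕ, j ≤ k → |S.f (ρ k) x| ≤ |S.f (ρ j) x|

/-- The greedy set `Λ_m(x) = {ρ(0), …, ρ(m-1)}` associated to a greedy ordering `ρ`. -/
def Lam (ρ : ℕ → ℕ) (m : ℕ) : Finset ℕ := (Finset.range m).image ρ

/-- The `m`-th greedy approximation `G_m(x) = ∑_{j < m} e_{ρ(j)}^*(x) e_{ρ(j)}`. -/
noncomputable def G (S : SchauderBasisSys X) (x : X) (ρ : ℕ → ℕ) (m : ℕ) : X :=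
  ∑ j ∈ Finset.range m, S.f (ρ j) x • S.e (ρ j)

/-- Quasi-greedy: `‖G_m(x)‖ ≤ K ‖x‖` uniformly. -/
def QuasiGreedy (S : SchauderBasisSys X) : Prop :=
  ∃ K : ℝ, ∀ (x : X) (ρ : ℕ → ℕ) (m : ℕ),
    S.IsGreedyOrdering x ρ → ‖S.G x ρ m‖ ≤ K * ‖x‖

/-- Conservative: `‖1_A‖ ≤ Γ ‖1_B‖` whenever `|A| ≤ |B|` and `max A < min B`. -/
def Conservative (S : SchauderBasisSys X) : Prop :=
  ∃ Γ : ℝ, ∀ A B : Finset ℕ, A.card ≤ B.card →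
    (∀ i ∈ A, ∀ j ∈ B, i < j) → ‖S.ind A‖ ≤ Γ * ‖S.ind B‖

/-- Reverse conservative: `‖1_A‖ ≤ Γ ‖1_B‖` whenever `|A| ≤ |B|` and `max B < min A`. -/
def ReverseConservative (S : SchauderBasisSys X) : Prop :=
  ∃ Γ : ℝ, ∀ A B : Finset ℕ, A.card ≤ B.card →
    (∀ i ∈ A, ∀ j ∈ B, j < i) → ‖S.ind A‖ ≤ Γ * ‖S.ind B‖

/-- Partially greedy: `‖x - G_m(x)‖ ≤ C ‖∑_{n ≥ m} e_n^*(x) e_n‖ = C ‖x - P_{[0,m)}(x)‖`. -/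
def PartiallyGreedy (S : SchauderBasisSys X) : Prop :=
  ∃ C : ℝ, ∀ (x : X) (ρ : ℕ → ℕ) (m : ℕ), S.IsGreedyOrdering x ρ →
    ‖x - S.G x ρ m‖ ≤ C * ‖x - S.P (Finset.range m) x‖

/-- Almost greedy: `‖x - G_m(x)‖ ≤ C inf{‖x - P_A(x)‖ : |A| ≤ m}`. -/
def AlmostGreedy (S : SchauderBasisSys X) : Prop :=
  ∃ C : ℝ, ∀ (x : X) (ρ : ℕ → ℕ) (m : ℕ) (A : Finset ℕ), S.IsGreedyOrdering x ρ →
    A.card ≤ m → ‖x - S.G x ρ m‖ ≤ C * ‖x - S.P A x‖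

end SchauderBasisSys

namespace SchauderBasisSys

variable {X : Type*} [NormedAddCommGroup X] [NormedSpace ℝ X]

/-- Only finitely many coordinates of `x` are nonzero. -/
def FinSupp (S : SchauderBasisSys X) (x : X) : Prop := ∃ N : ℕ, ∀ n, N ≤ n → S.f n x = 0

/-- Deleting a largest coordinate `l` neither increases the norm nor is worse than deleting any
coordinate to the right of `l`. -/
def RightOneStep (S : SchauderBasisSys X) : Prop :=
  ∀ (x : X) (ρ : ℕ → ℕ), S.IsGreedyOrdering x ρ → ∀ j : ℕ, ρ 0 < j →
    ‖x - S.G x ρ 1‖ ≤ min ‖x‖ ‖x - S.f j x • S.e j‖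

variable {S : SchauderBasisSys X}

theorem f_smul_e (n i : ℕ) (c : ℝ) : S.f n (c • S.e i) = if n = i then c else 0 := by
  simp [S.biorth]

theorem f_P (n : ℕ) (A : Finset ℕ) (x : X) :
    S.f n (S.P A x) = if n ∈ A then S.f n x else 0 := by
  simp [P, map_sum, S.biorth]

theorem P_insert {a : ℕ} {A : Finset ℕ} (ha : a ∉ A) (x : X) :
    S.P (insert a A) x = S.f a x • S.e a + S.P A x := by
  simp [P, Finset.sum_insert ha]

theorem P_sub_smul_e_of_notMem {a : ℕ} {A : Finset ℕ} (ha : a ∉ A) (x : X) (c : ℝ) :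
    S.P A (x - c • S.e a) = S.P A x := by
  refine Finset.sum_congr rfl fun i hi => ?_
  have hia : i ≠ a := fun h => ha (h ▸ hi)
  rw [map_sub, f_smul_e, if_neg hia, sub_zero]

theorem G_eq_P_Lam {ρ : ℕ → ℕ} (hρ : Function.Injective ρ) (x : X) (m : ℕ) :
    S.G x ρ m = S.P (Lam ρ m) x := by
  rw [G, P, Lam, Finset.sum_image hρ.injOn]

theorem FinSupp.add {x y : X} (hx : S.FinSupp x) (hy : S.FinSupp y) : S.FinSupp (x + y) := by
  obtain ⟨N, hN⟩ := hx
  obtain ⟨M, hM⟩ := hy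
  refine ⟨max N M, fun n hn => ?_⟩
  rw [map_add, hN n (le_of_max_le_left hn), hM n (le_of_max_le_right hn), add_zero]

theorem FinSupp.sub {x y : X} (hx : S.FinSupp x) (hy : S.FinSupp y) : S.FinSupp (x - y) := by
  obtain ⟨N, hN⟩ := hx
  obtain ⟨M, hM⟩ := hy
  refine ⟨max N M, fun n hn => ?_⟩
  rw [map_sub, hN n (le_of_max_le_left hn), hM n (le_of_max_le_right hn), sub_zero]

theorem finSupp_smul_e (c : ℝ) (i : ℕ) : S.FinSupp (c • S.e i) :=
  ⟨i + 1, fun n hn => by rw [f_smul_e, if_neg (by omega)]⟩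

theorem finSupp_P (A : Finset ℕ) (x : X) : S.FinSupp (S.P A x) := by
  refine ⟨A.sup id + 1, fun n hn => ?_⟩
  rw [f_P, if_neg]
  intro h
  have : n ≤ A.sup id := Finset.le_sup (f := id) h
  omega

/-- A sequence that vanishes from some point on can be rearranged in nonincreasing order of
absolute value by a permutation of `ℕ`. -/
theorem exists_perm_antitone_abs (g : ℕ → ℝ) (N : ℕ) (hg : ∀ n, N ≤ n → g n = 0) :
    ∃ σ : Equiv.Perm ℕ, ∀ j k, j ≤ k → |g (σ k)| ≤ |g (σ j)| := by
  let h : Fin N → ℝ := fun i => -|g i|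
  let τ : Equiv.Perm (Fin N) := Tuple.sort h
  have hτ : Monotone (h ∘ τ) := Tuple.monotone_sort h
  let σ : Equiv.Perm ℕ := τ.extendDomain (Fin.equivSubtype (n := N))
  have hlt : ∀ k (hk : k < N), σ k = τ ⟨k, hk⟩ := fun k hk => by
    simpa using Equiv.Perm.extendDomain_apply_image τ (Fin.equivSubtype (n := N)) ⟨k, hk⟩
  have hge : ∀ k, N ≤ k → σ k = k := fun k hk =>
    Equiv.Perm.extendDomain_apply_not_subtype τ _ (by omega)
  refine ⟨σ, fun j k hjk => ?_⟩
  rcases lt_or_ge k N with hk | hk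
  · have hj : j < N := by omega
    rw [hlt k hk, hlt j hj]
    have := hτ (show (⟨j, hj⟩ : Fin N) ≤ ⟨k, hk⟩ from hjk)
    simpa [h] using this
  · rw [hge k hk, hg k hk]
    simp

theorem FinSupp.exists_greedyOrdering {z : X} (hz : S.FinSupp z) {l : ℕ}
    (hl : ∀ n, |S.f n z| ≤ |S.f l z|) : ∃ ρ, S.IsGreedyOrdering z ρ ∧ ρ 0 = l := by
  obtain ⟨N, hN⟩ := hz
  obtain ⟨σ, hσ⟩ := exists_perm_antitone_abs (fun n => S.f n z) N hN
  have hmax : |S.f (σ 0) z| = |S.f l z| :=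
    le_antisymm (hl _) (by simpa using hσ 0 (σ.symm l) (Nat.zero_le _))
  have hswap : ∀ n, |S.f (Equiv.swap (σ 0) l n) z| = |S.f n z| := by
    intro n
    rcases eq_or_ne n (σ 0) with rfl | h0
    · simp [hmax]
    rcases eq_or_ne n l with rfl | h1
    · simp [hmax]
    · rw [Equiv.swap_apply_of_ne_of_ne h0 h1]
  let τ : Equiv.Perm ℕ := σ.trans (Equiv.swap (σ 0) l)
  refine ⟨τ, ⟨τ.injective, fun n _ => τ.surjective n, fun j k hjk => ?_⟩, by simp [τ]⟩
  simpa [τ, hswap] using hσ j k hjk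

theorem RightOneStep.norm_sub_le (h : S.RightOneStep) {z : X} (hz : S.FinSupp z) {l a : ℕ}
    (hl : ∀ n, |S.f n z| ≤ |S.f l z|) (hla : l < a) :
    ‖z - S.f l z • S.e l‖ ≤ min ‖z‖ ‖z - S.f a z • S.e a‖ := by
  obtain ⟨ρ, hρ, rfl⟩ := hz.exists_greedyOrdering hl
  simpa [G] using h z ρ hρ a hla

theorem RightOneStep.norm_add_le (h : S.RightOneStep) {w : X} (hw : S.FinSupp w) {l a : ℕ}
    (hla : l < a) (hwl : S.f l w = 0) (hwa : S.f a w = 0) {r s : ℝ}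
    (hs : ∀ n, |S.f n w| ≤ |s|) (hr : |r| ≤ |s|) :
    ‖w + r • S.e a‖ ≤ ‖w + s • S.e l‖ := by
  have key : ∀ t : ℝ, |t| = |s| → ‖w + t • S.e a‖ ≤ ‖w + s • S.e l‖ := by
    intro t ht
    have hfl : S.f l (w + t • S.e a + s • S.e l) = s := by
      simp [S.biorth, hwl, hla.ne]
    have hfa : S.f a (w + t • S.e a + s • S.e l) = t := by
      simp [S.biorth, hwa, hla.ne']
    have hmax : ∀ n, |S.f n (w + t • S.e a + s • S.e l)| ≤
        |S.f l (w + t • S.e a + s • S.e l)| := by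
      intro n
      rw [hfl]
      rcases eq_or_ne n l with rfl | hnl
      · rw [hfl]
      rcases eq_or_ne n a with rfl | hna
      · rw [hfa, ht]
      · simpa [S.biorth, hnl, hna] using hs n
    have := (h.norm_sub_le ((hw.add (finSupp_smul_e t a)).add (finSupp_smul_e s l)) hmax
      hla).trans (min_le_right _ _)
    rw [hfl, hfa] at this
    rwa [add_sub_cancel_right, add_right_comm, add_sub_cancel_right] at this
  have hconv : Convex ℝ {c : ℝ | ‖w + c • S.e a‖ ≤ ‖w + s • S.e l‖} := by
    intro c hc d hd p q hp hq hpq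
    simp only [Set.mem_ofPred_eq] at hc hd ⊢
    have hsplit : w + (p • c + q • d) • S.e a = p • (w + c • S.e a) + q • (w + d • S.e a) := by
      have hw1 : w = (p + q) • w := by rw [hpq, one_smul]
      nth_rewrite 1 [hw1]
      module
    rw [hsplit]
    calc _ ≤ ‖p • (w + c • S.e a)‖ + ‖q • (w + d • S.e a)‖ := _root_.norm_add_le _ _
      _ = p * ‖w + c • S.e a‖ + q * ‖w + d • S.e a‖ := by
        rw [norm_smul, norm_smul, Real.norm_of_nonneg hp, Real.norm_of_nonneg hq]
      _ ≤ p * ‖w + s • S.e l‖ + q * ‖w + s • S.e l‖ := by gcongr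
      _ = ‖w + s • S.e l‖ := by rw [← add_mul, hpq, one_mul]
  exact hconv.ordConnected.out (key (-|s|) (by simp)) (key |s| (by simp)) (abs_le.mp hr)

/-- The comparison between a greedy set `Λ` and a set `A` to its right, for finitely supported
vectors. -/
theorem RightOneStep.norm_sub_P_le_of_finSupp (h : S.RightOneStep) (Λ : Finset ℕ) :
    ∀ (x : X) (A : Finset ℕ), S.FinSupp x → A.card ≤ Λ.card → (∀ i ∈ A, ∀ j ∈ Λ, j < i) →
      (∀ j ∈ Λ, ∀ n ∉ Λ, |S.f n x| ≤ |S.f j x|) → ‖x - S.P Λ x‖ ≤ ‖x - S.P A x‖ := by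
  induction hk : Λ.card generalizing Λ with
  | zero =>
    intro x A _ hA _ _
    rw [Finset.card_eq_zero.mp hk, Finset.card_eq_zero.mp (Nat.le_zero.mp hA)]
  | succ k ih =>
    intro x A hx hA hlt hgr
    obtain ⟨l, hlΛ, hlmin⟩ := Λ.exists_min_image (fun i => |S.f i x|)
      (Finset.card_pos.mp (by omega))
    have hcard : (Λ.erase l).card = k := by rw [Finset.card_erase_of_mem hlΛ]; omega
    have hPΛ : S.P Λ x = S.f l x • S.e l + S.P (Λ.erase l) x := by
      rw [← P_insert (Finset.notMem_erase l Λ), Finset.insert_erase hlΛ]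
    have hgr' : ∀ j ∈ Λ.erase l, ∀ n ∉ Λ.erase l, |S.f n x| ≤ |S.f j x| := by
      intro j hj n hn
      rcases eq_or_ne n l with rfl | hnl
      · exact hlmin j (Finset.mem_of_mem_erase hj)
      · exact hgr j (Finset.mem_of_mem_erase hj) n fun hn' => hn (Finset.mem_erase.mpr ⟨hnl, hn'⟩)
    rcases A.eq_empty_or_nonempty with rfl | ⟨a, ha⟩
    · have hfl : S.f l (x - S.P (Λ.erase l) x) = S.f l x := by simp [f_P]
      have hmax : ∀ n, |S.f n (x - S.P (Λ.erase l) x)| ≤ |S.f l (x - S.P (Λ.erase l) x)| := by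
        intro n
        rw [hfl, map_sub, f_P]
        split_ifs with hn
        · simp
        · rw [sub_zero]
          rcases eq_or_ne n l with rfl | hnl
          · rfl
          · exact hgr l hlΛ n fun hn' => hn (Finset.mem_erase.mpr ⟨hnl, hn'⟩)
      have hstep := (h.norm_sub_le (hx.sub (finSupp_P _ _)) hmax (Nat.lt_succ_self l)).trans
        (min_le_left _ _)
      rw [hfl, sub_sub, add_comm, ← hPΛ] at hstep
      exact hstep.trans (ih _ hcard x ∅ hx (by simp) (by simp) hgr')
    · have haΛ : a ∉ Λ := fun h' => (hlt a ha a h').false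
      have haΛ' : a ∉ Λ.erase l := fun h' => haΛ (Finset.mem_of_mem_erase h')
      have hla : l < a := hlt a ha l hlΛ
      have hPA : S.P A x = S.f a x • S.e a + S.P (A.erase a) x := by
        rw [← P_insert (Finset.notMem_erase a A), Finset.insert_erase ha]
      have hswap := h.norm_add_le (w := x - S.P Λ x - S.f a x • S.e a) (r := S.f a x)
        (s := S.f l x) ((hx.sub (finSupp_P _ _)).sub (finSupp_smul_e _ _)) hla
        (by simp [f_P, S.biorth, hlΛ, hla.ne])
        (by simp [f_P, S.biorth, haΛ])
        (fun n => by
          rw [map_sub, map_sub, f_P, f_smul_e]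
          by_cases hn : n ∈ Λ
          · have hna : n ≠ a := fun h' => haΛ (h' ▸ hn)
            simp [hn, hna]
          · rcases eq_or_ne n a with rfl | hna
            · simp [hn]
            · simpa [hn, hna] using hgr l hlΛ n hn)
        (hgr l hlΛ a haΛ)
      have hrec := ih (Λ.erase l) hcard (x - S.f a x • S.e a) (A.erase a)
        (hx.sub (finSupp_smul_e _ _)) (by rw [Finset.card_erase_of_mem ha]; omega)
        (fun i hi j hj => hlt i (Finset.mem_of_mem_erase hi) j (Finset.mem_of_mem_erase hj))
        (fun j hj n hn => by
          have hja : j ≠ a := fun h' => haΛ' (h' ▸ hj)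
          rw [map_sub, map_sub, f_smul_e, f_smul_e, if_neg hja, sub_zero]
          rcases eq_or_ne n a with rfl | hna
          · simp
          · simpa [hna] using hgr' j hj n hn)
      rw [P_sub_smul_e_of_notMem haΛ', P_sub_smul_e_of_notMem (Finset.notMem_erase a A)] at hrec
      calc ‖x - S.P Λ x‖ = ‖x - S.P Λ x - S.f a x • S.e a + S.f a x • S.e a‖ := by
            rw [sub_add_cancel]
        _ ≤ ‖x - S.P Λ x - S.f a x • S.e a + S.f l x • S.e l‖ := hswap
        _ = ‖x - S.f a x • S.e a - S.P (Λ.erase l) x‖ := by rw [hPΛ]; congr 1; abel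
        _ ≤ ‖x - S.f a x • S.e a - S.P (A.erase a) x‖ := hrec
        _ = ‖x - S.P A x‖ := by rw [hPA, sub_sub]

theorem tendsto_P_range (x : X) :
    Tendsto (fun N => S.P (Finset.range N) x) atTop (𝓝 x) := S.expansion x

theorem continuous_P (A : Finset ℕ) : Continuous (S.P A) := by
  unfold P
  fun_prop

/-- The comparison between a greedy set `Λ` and a set `A` to its right. -/
theorem RightOneStep.norm_sub_P_le (h : S.RightOneStep) {Λ A : Finset ℕ} {x : X}
    (hcard : A.card ≤ Λ.card) (hlt : ∀ i ∈ A, ∀ j ∈ Λ, j < i)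
    (hgr : ∀ j ∈ Λ, ∀ n ∉ Λ, |S.f n x| ≤ |S.f j x|) : ‖x - S.P Λ x‖ ≤ ‖x - S.P A x‖ := by
  have hlim : ∀ B : Finset ℕ, Tendsto
      (fun N => ‖S.P (Finset.range N) x - S.P B (S.P (Finset.range N) x)‖) atTop
      (𝓝 ‖x - S.P B x‖) := fun B =>
    ((tendsto_P_range x).sub (((continuous_P B).tendsto x).comp (tendsto_P_range x))).norm
  refine le_of_tendsto_of_tendsto (hlim Λ) (hlim A) ?_
  filter_upwards [eventually_gt_atTop (Λ.sup id)] with N hN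
  refine h.norm_sub_P_le_of_finSupp Λ _ A (finSupp_P _ _) hcard hlt fun j hj n hn => ?_
  have hjN : j < N := (Finset.le_sup (f := id) hj).trans_lt hN
  rw [f_P, f_P, if_pos (Finset.mem_range.mpr hjN)]
  split_ifs
  · exact hgr j hj n hn
  · simp

theorem IsGreedyOrdering.abs_le {x : X} {ρ : ℕ → ℕ} (hρ : S.IsGreedyOrdering x ρ) {m j n : ℕ}
    (hj : j ∈ Lam ρ m) (hn : n ∉ Lam ρ m) : |S.f n x| ≤ |S.f j x| := by
  rcases eq_or_ne (S.f n x) 0 with h0 | h0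
  · simp [h0]
  obtain ⟨k, rfl⟩ := hρ.2.1 n h0
  obtain ⟨i, hi, rfl⟩ := Finset.mem_image.mp hj
  have hk : m ≤ k := by
    by_contra hk
    exact hn (Finset.mem_image_of_mem ρ (Finset.mem_range.mpr (not_le.mp hk)))
  exact hρ.2.2 i k ((Finset.mem_range.mp hi).le.trans hk)

end SchauderBasisSys

open SchauderBasisSys

/-- A Schauder basis satisfies `‖x - G_m(x)‖ ≤ σ̃^R_m(x)` for all `x`,
`m` and greedy orderings (is `1`-reverse partially greedy in the `σ̃^R` sense) if and only
if for every `x`, every greedy ordering `ρ` for `x`, and every index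
`j > β_1(x) = ρ(0)`, one has `‖x - G_1(x)‖ ≤ min(‖x‖, ‖x - e_j^*(x) e_j‖)`. -/
theorem stmt_12 {X : Type*} [NormedAddCommGroup X] [NormedSpace ℝ X] [CompleteSpace X]
    (S : SchauderBasisSys X) :
    (∀ (x : X) (ρ : ℕ → ℕ) (m : ℕ) (A : Finset ℕ),
        S.IsGreedyOrdering x ρ → A.card ≤ m →
        (∀ i ∈ A, ∀ j ∈ Lam ρ m, j < i) →
        ‖x - S.G x ρ m‖ ≤ ‖x - S.P A x‖) ↔
      (∀ (x : X) (ρ : ℕ → ℕ), S.IsGreedyOrdering x ρ → ∀ j : ℕ, ρ 0 < j →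
        ‖x - S.G x ρ 1‖ ≤ min ‖x‖ ‖x - S.f j x • S.e j‖) := by
  constructor
  · intro h x ρ hρ j hj
    refine le_min ?_ ?_
    · simpa [P] using h x ρ 1 ∅ hρ (by simp) (by simp)
    · simpa [P] using h x ρ 1 {j} hρ (by simp) (by simpa [Lam] using hj)
  · intro (h : S.RightOneStep) x ρ m A hρ hA hlt
    rw [G_eq_P_Lam hρ.1]
    refine h.norm_sub_P_le ?_ hlt fun j hj n hn => hρ.abs_le hj hn
    rwa [Lam, Finset.card_image_of_injective _ hρ.1, Finset.card_range]
end

section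
/- Let ((e_n),(e_n^*)) be an almost greedy bounded Markushevich basis of a real Banach space X, let 0 < τ < 1 and 0 ≤ λ < 1. Then there exists a constant C such that for every x ∈ X, every m ∈ ℕ, every τ-greedy set Λ_m^τ(x) of order m for x (obtained by the weak thresholding greedy algorithm), every finite set A ⊂ ℕ with |A| ≤ m and |A ∩ Λ_m^τ(x)| ≤ λm, and all real scalars (a_i)_{i∈A}, one has ‖x − G_m^τ(x)‖ ≤ C‖x − Σ_{i∈A} a_i e_i‖, where G_m^τ(x) = Σ_{n∈Λ_m^τ(x)} e_n^*(x)e_n. -/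
/-- A bounded Markushevich basis of a real normed space `X`: a biorthogonal system
`((e_n), (f_n))` whose vectors have dense linear span, whose functionals separate points,
and which is bounded: `a < ‖e_n‖, ‖f_n‖ < b` for some constants `0 < a < b`. -/
structure BddMarkushevichBasis (X : Type*) [NormedAddCommGroup X] [NormedSpace ℝ X] where
  e : ℕ → X
  f : ℕ → X →L[ℝ] ℝ
  biorth : ∀ m n : ℕ, f m (e n) = if m = n then (1 : ℝ) else 0
  dense_span : Dense (Submodule.span ℝ (Set.range e) : Set X)
  separating : ∀ x y : X, (∀ n : ℕ, f n x = f n y) → x = y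
  a : ℝ
  b : ℝ
  ha : 0 < a
  e_bounds : ∀ n : ℕ, a < ‖e n‖ ∧ ‖e n‖ < b
  f_bounds : ∀ n : ℕ, a < ‖f n‖ ∧ ‖f n‖ < b

namespace BddMarkushevichBasis

variable {X : Type*} [NormedAddCommGroup X] [NormedSpace ℝ X]

/-- The coordinate projection onto a finite set `A` of indices: `P_A x = ∑_{i ∈ A} e_i^*(x) e_i`. -/
noncomputable def P (M : BddMarkushevichBasis X) (A : Finset ℕ) (x : X) : X :=
  ∑ i ∈ A, M.f i x • M.e i

/-- A greedy ordering for `x`: an injection `ρ : ℕ → ℕ` whose range contains the support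
of `x` and which rearranges the coordinates of `x` in nonincreasing order of absolute
value. -/
def IsGreedyOrdering (M : BddMarkushevichBasis X) (x : X) (ρ : ℕ → ℕ) : Prop :=
  Function.Injective ρ ∧ (∀ n : ℕ, M.f n x ≠ 0 → n ∈ Set.range ρ) ∧
    ∀ j k : ℕ, j ≤ k → |M.f (ρ k) x| ≤ |M.f (ρ j) x|

/-- The greedy set `Λ_m(x) = {ρ(0), …, ρ(m-1)}` associated to a greedy ordering `ρ`. -/
def Lam (ρ : ℕ → ℕ) (m : ℕ) : Finset ℕ := (Finset.range m).image ρ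

/-- The `m`-th greedy approximation `G_m(x) = ∑_{j < m} e_{ρ(j)}^*(x) e_{ρ(j)}`. -/
noncomputable def G (M : BddMarkushevichBasis X) (x : X) (ρ : ℕ → ℕ) (m : ℕ) : X :=
  ∑ j ∈ Finset.range m, M.f (ρ j) x • M.e (ρ j)

/-- Almost greedy: `‖x - G_m(x)‖ ≤ C inf{‖x - P_A(x)‖ : |A| ≤ m}`. -/
def AlmostGreedy (M : BddMarkushevichBasis X) : Prop :=
  ∃ C : ℝ, ∀ (x : X) (ρ : ℕ → ℕ) (m : ℕ) (A : Finset ℕ), M.IsGreedyOrdering x ρ →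
    A.card ≤ m → ‖x - M.G x ρ m‖ ≤ C * ‖x - M.P A x‖

end BddMarkushevichBasis

open BddMarkushevichBasis

namespace BddMarkushevichBasis

variable {X : Type*} [NormedAddCommGroup X] [NormedSpace ℝ X]

/-- The coordinates of a finite linear combination of the basis vectors. -/
lemma f_sum_smul (M : BddMarkushevichBasis X) (n : ℕ) (S : Finset ℕ) (c : ℕ → ℝ) :
    M.f n (∑ i ∈ S, c i • M.e i) = if n ∈ S then c n else 0 := by
  simp [map_sum, M.biorth]

lemma b_pos (M : BddMarkushevichBasis X) : 0 < M.b :=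
  (norm_nonneg _).trans_lt (M.e_bounds 0).2

lemma finite_support_of_mem_span (M : BddMarkushevichBasis X) {z : X}
    (hz : z ∈ Submodule.span ℝ (Set.range M.e)) : {j | M.f j z ≠ 0}.Finite := by
  induction hz using Submodule.span_induction with
  | mem z h =>
    obtain ⟨n, rfl⟩ := h
    refine (Set.finite_singleton n).subset fun j hj => ?_
    by_contra h
    exact hj (by rw [M.biorth, if_neg (mt Set.mem_singleton_iff.2 h)])
  | zero => simp
  | add y z _ _ hy hz =>
    refine (hy.union hz).subset fun j hj => ?_
    by_contra h
    simp only [Set.mem_union, Set.mem_ofPred_eq, not_or, not_not] at h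
    exact hj (by rw [map_add, h.1, h.2, add_zero])
  | smul r z _ hz =>
    refine hz.subset fun j hj h => hj ?_
    rw [map_smul, h, smul_zero]

/-- Only finitely many coordinates of a vector exceed a given positive threshold. -/
lemma finite_le_abs_f (M : BddMarkushevichBasis X) (y : X) {α : ℝ} (hα : 0 < α) :
    {j | α ≤ |M.f j y|}.Finite := by
  obtain ⟨z, hz, hyz⟩ := Metric.mem_closure_iff.1 (M.dense_span y) (α / M.b)
    (div_pos hα M.b_pos)
  refine (M.finite_support_of_mem_span hz).subset fun j hj h => ?_
  have hlt : |M.f j y| < α := by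
    calc |M.f j y| = ‖M.f j (y - z)‖ := by rw [map_sub, h, sub_zero, Real.norm_eq_abs]
      _ ≤ ‖M.f j‖ * ‖y - z‖ := (M.f j).le_opNorm _
      _ ≤ M.b * ‖y - z‖ := by gcongr; exact (M.f_bounds j).2.le
      _ < M.b * (α / M.b) := by
        rw [← dist_eq_norm]
        exact mul_lt_mul_of_pos_left hyz M.b_pos
      _ = α := mul_div_cancel₀ _ M.b_pos.ne'
  exact absurd hj (not_le.2 hlt)

/-- The system is almost greedy with constant `C₀`, in terms of greedy sets. -/
def AlmostGreedyWith (M : BddMarkushevichBasis X) (C₀ : ℝ) : Prop :=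
  ∀ (x : X) (m : ℕ) (Λ : Finset ℕ), Λ.card = m →
    (∀ i ∈ Λ, ∀ j ∉ Λ, |M.f j x| ≤ |M.f i x|) →
    ∀ A : Finset ℕ, A.card ≤ m →
      ‖x - ∑ i ∈ Λ, M.f i x • M.e i‖ ≤ C₀ * ‖x - M.P A x‖

namespace AlmostGreedyWith

variable {M : BddMarkushevichBasis X} {C₀ : ℝ}

lemma mono (h : M.AlmostGreedyWith C₀) {C₁ : ℝ} (hC : C₀ ≤ C₁) : M.AlmostGreedyWith C₁ :=
  fun x m Λ hm hΛ A hA => (h x m Λ hm hΛ A hA).trans (by gcongr)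

/-- Almost greedy systems are quasi-greedy. -/
lemma quasi_greedy (h : M.AlmostGreedyWith C₀) {x : X} {Λ : Finset ℕ}
    (hΛ : ∀ i ∈ Λ, ∀ j ∉ Λ, |M.f j x| ≤ |M.f i x|) :
    ‖x - ∑ i ∈ Λ, M.f i x • M.e i‖ ≤ C₀ * ‖x‖ := by
  simpa [P] using h x _ Λ rfl hΛ ∅ (by simp)

lemma norm_sum_le_of_disjoint (h : M.AlmostGreedyWith C₀) {A B : Finset ℕ}
    (hAB : Disjoint A B) (hcard : A.card ≤ B.card) {α : ℝ} {c d : ℕ → ℝ}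
    (hc : ∀ i ∈ A, |c i| ≤ α) (hd : ∀ i ∈ B, α ≤ |d i|) :
    ‖∑ i ∈ A, c i • M.e i‖ ≤ C₀ * ‖∑ i ∈ B, d i • M.e i‖ := by
  set x : X := ∑ i ∈ A, c i • M.e i + ∑ i ∈ B, d i • M.e i with hx
  have hf : ∀ n, M.f n x = (if n ∈ A then c n else 0) + if n ∈ B then d n else 0 := by
    intro n
    rw [hx, map_add, f_sum_smul, f_sum_smul]
  have hfA : ∀ n ∈ A, M.f n x = c n := fun n hn => by
    rw [hf, if_pos hn, if_neg (Finset.disjoint_left.1 hAB hn), add_zero]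
  have hfB : ∀ n ∈ B, M.f n x = d n := fun n hn => by
    rw [hf, if_pos hn, if_neg (Finset.disjoint_right.1 hAB hn), zero_add]
  have key := h x _ B rfl (fun i hi j hj => by
    by_cases hjA : j ∈ A
    · rw [hfA j hjA, hfB i hi]
      exact (hc j hjA).trans (hd i hi)
    · simp [hf j, hjA, hj]) A hcard
  have h₁ : ∑ i ∈ B, M.f i x • M.e i = ∑ i ∈ B, d i • M.e i :=
    Finset.sum_congr rfl fun i hi => by rw [hfB i hi]
  have h₂ : M.P A x = ∑ i ∈ A, c i • M.e i :=
    Finset.sum_congr rfl fun i hi => by rw [hfA i hi]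
  rwa [h₁, h₂, hx, add_sub_cancel_right, add_sub_cancel_left] at key

/-- A form of superdemocracy with arbitrary coefficients. -/
lemma norm_sum_le (h : M.AlmostGreedyWith C₀) (hC : 0 ≤ C₀) {A B : Finset ℕ}
    (hcard : A.card ≤ B.card) {α : ℝ} (hα : 0 ≤ α) {c d : ℕ → ℝ}
    (hc : ∀ i ∈ A, |c i| ≤ α) (hd : ∀ i ∈ B, α ≤ |d i|) :
    ‖∑ i ∈ A, c i • M.e i‖ ≤ C₀ ^ 2 * ‖∑ i ∈ B, d i • M.e i‖ := by
  obtain ⟨D, hD, hDcard⟩ :=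
    (Set.Finite.infinite_compl (A ∪ B).finite_toSet).exists_subset_card_eq B.card
  have hdisj : ∀ i ∈ D, i ∉ A ∧ i ∉ B := fun i hi => by
    simpa [not_or] using hD hi
  calc ‖∑ i ∈ A, c i • M.e i‖ ≤ C₀ * ‖∑ i ∈ D, α • M.e i‖ :=
        h.norm_sum_le_of_disjoint (d := fun _ => α)
          (Finset.disjoint_right.2 fun i hi => (hdisj i hi).1)
          (hcard.trans hDcard.ge) hc (fun _ _ => le_abs_self α)
    _ ≤ C₀ * (C₀ * ‖∑ i ∈ B, d i • M.e i‖) := by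
        gcongr
        exact h.norm_sum_le_of_disjoint (c := fun _ => α)
          (Finset.disjoint_left.2 fun i hi => (hdisj i hi).2)
          hDcard.le (fun _ _ => (abs_of_nonneg hα).le) hd
    _ = C₀ ^ 2 * ‖∑ i ∈ B, d i • M.e i‖ := by ring

/-- A vector with large coordinates on `D` dominates all combinations with small coefficients
supported on at most `|D|` indices. -/
lemma norm_sum_le_norm (h : M.AlmostGreedyWith C₀) (hC : 0 ≤ C₀) {y : X} {α : ℝ} (hα : 0 < α)
    {A D : Finset ℕ} (hD : ∀ j ∈ D, α ≤ |M.f j y|) (hcard : A.card ≤ D.card) {c : ℕ → ℝ}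
    (hc : ∀ i ∈ A, |c i| ≤ α) :
    ‖∑ i ∈ A, c i • M.e i‖ ≤ C₀ ^ 2 * (1 + C₀) * ‖y‖ := by
  set Γ := (M.finite_le_abs_f y hα).toFinset with hΓ
  have hmem : ∀ j, j ∈ Γ ↔ α ≤ |M.f j y| := fun j => by simp [hΓ]
  have hquasi := h.quasi_greedy (x := y) (Λ := Γ) fun i hi j hj =>
    (not_le.1 fun h => hj ((hmem j).2 h)).le.trans ((hmem i).1 hi)
  have hproj : ‖∑ i ∈ Γ, M.f i y • M.e i‖ ≤ (1 + C₀) * ‖y‖ := by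
    have := norm_sub_le y (y - ∑ i ∈ Γ, M.f i y • M.e i)
    rw [sub_sub_cancel] at this
    linarith
  calc ‖∑ i ∈ A, c i • M.e i‖ ≤ C₀ ^ 2 * ‖∑ i ∈ Γ, M.f i y • M.e i‖ :=
        h.norm_sum_le hC (hcard.trans (Finset.card_le_card fun j hj => (hmem j).2 (hD j hj)))
          hα.le hc fun i hi => (hmem i).1 hi
    _ ≤ C₀ ^ 2 * ((1 + C₀) * ‖y‖) := by gcongr
    _ = C₀ ^ 2 * (1 + C₀) * ‖y‖ := by ring

lemma norm_sum_le_nat_mul_norm (h : M.AlmostGreedyWith C₀) (hC : 0 ≤ C₀) {y : X} {α : ℝ}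
    (hα : 0 < α) {D : Finset ℕ} (hD : ∀ j ∈ D, α ≤ |M.f j y|) {c : ℕ → ℝ} (k : ℕ) :
    ∀ A : Finset ℕ, A.card ≤ k * D.card → (∀ i ∈ A, |c i| ≤ α) →
      ‖∑ i ∈ A, c i • M.e i‖ ≤ k * (C₀ ^ 2 * (1 + C₀) * ‖y‖) := by
  induction k with
  | zero =>
    intro A hA _
    have : A = ∅ := by simpa using hA
    simp [this]
  | succ k ih =>
    intro A hA hc
    obtain ⟨B, hBA, hB⟩ := Finset.exists_subset_card_eq (min_le_right D.card A.card)
    have h₁ := h.norm_sum_le_norm hC hα hD (hB.le.trans (min_le_left _ _))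
      fun i hi => hc i (hBA hi)
    have h₂ := ih (A \ B) (by
      rw [Finset.card_sdiff_of_subset hBA, hB]
      rw [add_mul, one_mul] at hA
      omega) fun i hi => hc i (Finset.sdiff_subset hi)
    rw [← Finset.sum_sdiff hBA]
    refine (norm_add_le _ _).trans ((add_le_add h₂ h₁).trans_eq ?_)
    push_cast
    ring

/-- Version of `norm_sum_le_nat_mul_norm` for coefficients bounded by `α / τ`. -/
lemma norm_sum_le_div_mul_norm (h : M.AlmostGreedyWith C₀) (hC : 0 ≤ C₀) {y : X} {α τ : ℝ}
    (hα : 0 < α) (hτ : 0 < τ) {A D : Finset ℕ} (hD : ∀ j ∈ D, α ≤ |M.f j y|) {c : ℕ → ℝ} {k : ℕ}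
    (hcard : A.card ≤ k * D.card) (hc : ∀ i ∈ A, τ * |c i| ≤ α) :
    ‖∑ i ∈ A, c i • M.e i‖ ≤ k * (C₀ ^ 2 * (1 + C₀)) / τ * ‖y‖ := by
  have key := h.norm_sum_le_nat_mul_norm hC hα hD (c := fun i => τ * c i) k A hcard
    fun i hi => by rw [abs_mul, abs_of_pos hτ]; exact hc i hi
  simp only [mul_smul, ← Finset.smul_sum] at key
  rw [norm_smul, Real.norm_of_nonneg hτ.le] at key
  rw [div_mul_eq_mul_div, le_div_iff₀ hτ]
  linarith

/-- The error of a `τ`-greedy approximation over `Λ` is controlled by the error of any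
approximation supported on a set `A` such that `|A ∪ Λ|` is comparable to `|Λ \ A|`. -/
lemma norm_sub_weak_greedy_le (h : M.AlmostGreedyWith C₀) (hC : 0 ≤ C₀) {τ : ℝ} (hτ : 0 < τ)
    {x : X} {A Λ : Finset ℕ} (hne : Λ.Nonempty)
    (hΛ : ∀ i ∈ Λ, ∀ j ∉ Λ, τ * |M.f j x| ≤ |M.f i x|) {k : ℕ}
    (hk : (A ∪ Λ).card ≤ k * (Λ \ A).card) (a : ℕ → ℝ) :
    ‖x - ∑ i ∈ Λ, M.f i x • M.e i‖ ≤
      (C₀ + 2 * (k * (C₀ ^ 2 * (1 + C₀)) / τ)) * ‖x - ∑ i ∈ A, a i • M.e i‖ := by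
  set y := x - ∑ i ∈ A, a i • M.e i with hy
  have hfy : ∀ n, M.f n y = M.f n x - if n ∈ A then a n else 0 := fun n => by
    rw [hy, map_sub, f_sum_smul]
  have hfyA : ∀ n ∉ A, M.f n y = M.f n x := fun n hn => by rw [hfy, if_neg hn, sub_zero]
  obtain ⟨i₀, hi₀, hmin⟩ := Λ.exists_min_image (fun i => |M.f i x|) hne
  rcases (abs_nonneg (M.f i₀ x)).eq_or_lt with h0 | hα
  · have hzero : x = ∑ i ∈ Λ, M.f i x • M.e i := M.separating _ _ fun n => by
      rw [f_sum_smul]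
      split_ifs with hn
      · rfl
      · have := hΛ i₀ hi₀ n hn
        rw [← h0] at this
        exact abs_nonpos_iff.1 (nonpos_of_mul_nonpos_right this hτ)
    rw [sub_eq_zero.2 hzero, norm_zero]
    positivity
  set α := |M.f i₀ x|
  have hD : ∀ j ∈ Λ \ A, α ≤ |M.f j y| := fun j hj => by
    rw [Finset.mem_sdiff] at hj
    rw [hfyA j hj.2]
    exact hmin j hj.1
  set Γ := (A ∪ Λ).filter fun j => α < τ * |M.f j y|
  have hsmall : ∀ j ∉ Γ, τ * |M.f j y| ≤ α := fun j hj => by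
    by_cases hjU : j ∈ A ∪ Λ
    · exact not_lt.1 fun h => hj (Finset.mem_filter.2 ⟨hjU, h⟩)
    · rw [Finset.mem_union, not_or] at hjU
      rw [hfyA j hjU.1]
      exact hΛ i₀ hi₀ j hjU.2
  have h₁ := h.quasi_greedy (x := y) (Λ := Γ) fun i hi j hj =>
    le_of_mul_le_mul_left ((hsmall j hj).trans (Finset.mem_filter.1 hi).2.le) hτ
  have h₂ := h.norm_sum_le_div_mul_norm hC hα hτ hD (A := (A ∪ Λ) \ Γ) (c := fun i => M.f i y)
    ((Finset.card_le_card Finset.sdiff_subset).trans hk)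
    fun i hi => hsmall i (Finset.mem_sdiff.1 hi).2
  have h₃ := h.norm_sum_le_div_mul_norm hC hα hτ hD (A := A \ Λ) (c := fun i => M.f i x)
    ((Finset.card_le_card (Finset.sdiff_subset.trans Finset.subset_union_left)).trans hk)
    fun i hi => hΛ i₀ hi₀ i (Finset.mem_sdiff.1 hi).2
  have hdecomp : x - ∑ i ∈ Λ, M.f i x • M.e i =
      (y - ∑ i ∈ Γ, M.f i y • M.e i) - ∑ i ∈ (A ∪ Λ) \ Γ, M.f i y • M.e i +
        ∑ i ∈ A \ Λ, M.f i x • M.e i := by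
    have hΓ : ∑ i ∈ (A ∪ Λ) \ Γ, M.f i y • M.e i + ∑ i ∈ Γ, M.f i y • M.e i =
        ∑ i ∈ A ∪ Λ, M.f i y • M.e i := Finset.sum_sdiff (Finset.filter_subset _ _)
    rw [sub_sub, add_comm (∑ i ∈ Γ, _), hΓ]
    refine M.separating _ _ fun n => ?_
    simp only [map_sub, map_add, f_sum_smul, Finset.mem_union, Finset.mem_sdiff]
    by_cases hA : n ∈ A <;> by_cases hL : n ∈ Λ <;> simp [hA, hL, hfy]
  rw [hdecomp]
  refine (norm_add_le _ _).trans ((add_le_add_left (norm_sub_le _ _) _).trans ?_)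
  linarith

end AlmostGreedyWith

end BddMarkushevichBasis

/-- Let `((e_n),(e_n^*))` be an almost greedy bounded Markushevich
basis of a real Banach space (almost greedy: `‖x - G_m(x)‖ ≤ C₀ inf{‖x - P_A x‖ : |A| ≤ m}`
for every greedy set `Λ` of order `m`, i.e. every `Λ` with `|Λ| = m` and
`min_{i∈Λ}|e_i^*(x)| ≥ sup_{j∉Λ}|e_j^*(x)|`). Let `0 < τ < 1` and `0 ≤ λ < 1`. Then there
is a constant `C` such that for every `x`, every `m`, every `τ`-greedy set `Λ` of order
`m` for `x` (i.e. `|Λ| = m` and `min_{i∈Λ}|e_i^*(x)| ≥ τ · sup_{j∉Λ}|e_j^*(x)|`, exactly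
the sets produced by the weak thresholding greedy algorithm), every finite `A` with
`|A| ≤ m` and `|A ∩ Λ| ≤ λ m`, and all scalars `(a_i)`:
`‖x - G_m^τ(x)‖ ≤ C ‖x - ∑_{i ∈ A} a_i e_i‖`, where `G_m^τ(x) = ∑_{i ∈ Λ} e_i^*(x) e_i`. -/
theorem stmt_15 {X : Type*} [NormedAddCommGroup X] [NormedSpace ℝ X] [CompleteSpace X]
    (M : BddMarkushevichBasis X) (τ lam : ℝ)
    (hτ0 : 0 < τ) (hτ1 : τ < 1) (hlam0 : 0 ≤ lam) (hlam1 : lam < 1)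
    (hAG : ∃ C₀ : ℝ, ∀ (x : X) (m : ℕ) (Λ : Finset ℕ), Λ.card = m →
      (∀ i ∈ Λ, ∀ j ∉ Λ, |M.f j x| ≤ |M.f i x|) →
      ∀ A : Finset ℕ, A.card ≤ m →
        ‖x - ∑ i ∈ Λ, M.f i x • M.e i‖ ≤ C₀ * ‖x - M.P A x‖) :
    ∃ C : ℝ, ∀ (x : X) (m : ℕ) (Λ : Finset ℕ), Λ.card = m →
      (∀ i ∈ Λ, ∀ j ∉ Λ, τ * |M.f j x| ≤ |M.f i x|) →
      ∀ (A : Finset ℕ) (a : ℕ → ℝ), A.card ≤ m → ((A ∩ Λ).card : ℝ) ≤ lam * m →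
        ‖x - ∑ i ∈ Λ, M.f i x • M.e i‖ ≤ C * ‖x - ∑ i ∈ A, a i • M.e i‖ := by
  obtain ⟨C₀, hC₀⟩ := hAG
  have h : M.AlmostGreedyWith (max C₀ 1) :=
    AlmostGreedyWith.mono (C₀ := C₀) hC₀ (le_max_left _ _)
  have hC : 1 ≤ max C₀ 1 := le_max_right _ _
  set C₁ := max C₀ 1
  obtain ⟨k, hk⟩ := exists_nat_ge (2 / (1 - lam))
  refine ⟨C₁ + 2 * (k * (C₁ ^ 2 * (1 + C₁)) / τ), fun x m Λ hm hΛ A a hA hAΛ => ?_⟩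
  rcases Λ.eq_empty_or_nonempty with rfl | hne
  · obtain rfl : A = ∅ := by simpa [← hm] using hA
    have : 0 ≤ 2 * (k * (C₁ ^ 2 * (1 + C₁)) / τ) := by positivity
    exact le_mul_of_one_le_left (norm_nonneg _) (by linarith)
  · refine h.norm_sub_weak_greedy_le (by linarith) hτ0 hne hΛ ?_ a
    have hsplit : ((Λ \ A).card : ℝ) + (A ∩ Λ).card = m := by
      rw [Finset.inter_comm, ← hm]
      exact_mod_cast Finset.card_sdiff_add_card_inter Λ A
    have hunion : ((A ∪ Λ).card : ℝ) ≤ 2 * m := by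
      have := Finset.card_union_le A Λ
      exact_mod_cast (by omega : (A ∪ Λ).card ≤ 2 * m)
    have hk' : 2 ≤ k * (1 - lam) := (div_le_iff₀ (by linarith)).1 hk
    have : ((A ∪ Λ).card : ℝ) ≤ k * (Λ \ A).card := by
      calc ((A ∪ Λ).card : ℝ) ≤ 2 * m := hunion
        _ ≤ k * (1 - lam) * m := by gcongr
        _ = k * ((1 - lam) * m) := by ring
        _ ≤ k * (Λ \ A).card := by
          gcongr
          linarith
    exact_mod_cast this
end

section
/- Let X be a real Banach space with an almost greedy Schauder basis (e_n), and let φ(n) = sup{‖1_A‖ : A ⊂ ℕ finite, |A| ≤ n} be its fundamental function. Then there exists a constant C such that for every finite set A ⊂ ℕ and all real scalars (a_i)_{i∈A}, one has φ(|A|)·min_{i∈A}|a_i| ≤ C‖Σ_{i∈A} a_i e_i‖. -/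
open Filter Topology

open SchauderBasisSys

/-- The fundamental function `φ(n) = sup{‖1_A‖ : A ⊆ ℕ finite, |A| ≤ n}` of a basis. -/
noncomputable def fundFun {X : Type*} [NormedAddCommGroup X] [NormedSpace ℝ X]
    (S : SchauderBasisSys X) (n : ℕ) : ℝ :=
  sSup {r : ℝ | ∃ A : Finset ℕ, A.card ≤ n ∧ r = ‖S.ind A‖}

namespace SchauderBasisSys

variable {X : Type*} [NormedAddCommGroup X] [NormedSpace ℝ X]

theorem f_sum_smul (S : SchauderBasisSys X) (A : Finset ℕ) (c : ℕ → ℝ) (n : ℕ) :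
    S.f n (∑ i ∈ A, c i • S.e i) = if n ∈ A then c n else 0 := by
  simp [map_sum, S.biorth]

/-- A duplicate-free list containing the support of `x`, with nonincreasing coordinates, extends
to a greedy ordering of `x`. -/
theorem exists_isGreedyOrdering_of_list (S : SchauderBasisSys X) (x : X) (L : List ℕ)
    (hnd : L.Nodup) (hL : ∀ n, S.f n x ≠ 0 → n ∈ L)
    (hsort : L.Pairwise fun i j => |S.f j x| ≤ |S.f i x|) :
    ∃ ρ : ℕ → ℕ, S.IsGreedyOrdering x ρ ∧ ∀ (k : ℕ) (hk : k < L.length), ρ k = L[k] := by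
  obtain ⟨N, hN⟩ : ∃ N, ∀ n ∈ L, n < N :=
    ⟨L.toFinset.sup id + 1, fun n hn =>
      Nat.lt_succ_of_le (Finset.le_sup (f := id) (List.mem_toFinset.2 hn))⟩
  let ρ : ℕ → ℕ := fun k => if hk : k < L.length then L[k] else N + k
  have hρ : ∀ (k : ℕ) (hk : k < L.length), ρ k = L[k] := fun k hk => dif_pos hk
  have hρ' : ∀ k, ¬ k < L.length → ρ k = N + k := fun k hk => dif_neg hk
  refine ⟨ρ, ⟨?_, ?_, ?_⟩, hρ⟩
  · intro j k hjk
    by_cases hj : j < L.length <;> by_cases hk : k < L.length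
    · rw [hρ j hj, hρ k hk] at hjk
      exact (hnd.getElem_inj_iff).1 hjk
    · rw [hρ j hj, hρ' k hk] at hjk
      have := hN _ (List.getElem_mem hj)
      omega
    · rw [hρ' j hj, hρ k hk] at hjk
      have := hN _ (List.getElem_mem hk)
      omega
    · rw [hρ' j hj, hρ' k hk] at hjk
      omega
  · intro n hn
    obtain ⟨k, hk, rfl⟩ := List.getElem_of_mem (hL n hn)
    exact ⟨k, hρ k hk⟩
  · intro j k hjk
    by_cases hk : k < L.length
    · rcases hjk.eq_or_lt with rfl | hlt
      · exact le_rfl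
      · rw [hρ k hk, hρ j (hlt.trans hk)]
        exact List.pairwise_iff_getElem.1 hsort j k _ _ hlt
    · have h0 : S.f (ρ k) x = 0 := by
        by_contra h
        have := hN _ (hL _ h)
        rw [hρ' k hk] at this
        omega
      simp [h0]

/-- If `x` is supported in the disjoint union of `A` and `B`, with coordinates of modulus at least
`t` on `A` and exactly `t` on `B`, then `P_A x` is a greedy approximation of `x`. -/
theorem exists_isGreedyOrdering_G_eq_P (S : SchauderBasisSys X) (x : X) (A B : Finset ℕ)
    (hAB : Disjoint A B) (t : ℝ) (hx : ∀ n, S.f n x ≠ 0 → n ∈ A ∪ B)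
    (hA : ∀ i ∈ A, t ≤ |S.f i x|) (hB : ∀ i ∈ B, |S.f i x| = t) :
    ∃ ρ : ℕ → ℕ, S.IsGreedyOrdering x ρ ∧ S.G x ρ A.card = S.P A x := by
  let r : ℕ → ℕ → Prop := fun i j => |S.f j x| ≤ |S.f i x|
  have : DecidableRel r := Classical.decRel r
  have : Std.Total r := ⟨fun i j => le_total _ _⟩
  have : IsTrans ℕ r := ⟨fun i j k hij hjk => le_trans hjk hij⟩
  let LA := A.toList.insertionSort r
  have hmem : ∀ n, n ∈ LA ↔ n ∈ A := fun n => by simp [LA]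
  have hlen : LA.length = A.card := by simp [LA]
  have hLA : LA.Nodup := (List.perm_insertionSort r _).nodup_iff.2 A.nodup_toList
  obtain ⟨ρ, hρ, hρL⟩ := S.exists_isGreedyOrdering_of_list x (LA ++ B.toList)
    (List.nodup_append.2 ⟨hLA, B.nodup_toList, fun i hi j hj =>
      Finset.disjoint_iff_ne.1 hAB i ((hmem i).1 hi) j (Finset.mem_toList.1 hj)⟩)
    (fun n hn => by simpa [hmem] using hx n hn)
    (List.pairwise_append.2 ⟨List.pairwise_insertionSort r _,
      List.pairwise_of_forall_mem_list fun i hi j hj => by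
        rw [hB i (Finset.mem_toList.1 hi), hB j (Finset.mem_toList.1 hj)],
      fun i hi j hj => by
        rw [hB j (Finset.mem_toList.1 hj)]
        exact hA i ((hmem i).1 hi)⟩)
  have hρA : ∀ (k : ℕ) (hk : k < LA.length), ρ k = LA[k] := fun k hk => by
    rw [hρL k (by rw [List.length_append]; omega), List.getElem_append_left hk]
  refine ⟨ρ, hρ, Finset.sum_nbij ρ ?_ hρ.1.injOn ?_ fun _ _ => rfl⟩
  · intro k hk
    have hk' : k < LA.length := hlen ▸ Finset.mem_range.1 hk
    rw [hρA k hk', ← hmem]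
    exact List.getElem_mem hk'
  · intro n hn
    obtain ⟨k, hk, rfl⟩ := List.getElem_of_mem ((hmem n).2 hn)
    exact ⟨k, by simpa [hlen] using hk, hρA k hk⟩

/-- Testing the almost greedy inequality on `∑_{i ∈ A} a_i e_i + t 1_B`. -/
theorem mul_norm_ind_le_of_disjoint (S : SchauderBasisSys X) {C : ℝ}
    (hC : ∀ (x : X) (ρ : ℕ → ℕ) (m : ℕ) (A : Finset ℕ), S.IsGreedyOrdering x ρ →
      A.card ≤ m → ‖x - S.G x ρ m‖ ≤ C * ‖x - S.P A x‖)
    {A B : Finset ℕ} (hAB : Disjoint A B) (hcard : B.card ≤ A.card) {t : ℝ} (ht : 0 ≤ t)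
    {a : ℕ → ℝ} (ha : ∀ i ∈ A, t ≤ |a i|) :
    t * ‖S.ind B‖ ≤ C * ‖∑ i ∈ A, a i • S.e i‖ := by
  let c : ℕ → ℝ := fun i => if i ∈ A then a i else t
  let x : X := ∑ i ∈ A ∪ B, c i • S.e i
  have hcA : ∀ i ∈ A, c i = a i := fun i hi => if_pos hi
  have hcB : ∀ i ∈ B, c i = t := fun i hi => if_neg (Finset.disjoint_right.1 hAB hi)
  have hf : ∀ n, S.f n x = if n ∈ A ∪ B then c n else 0 := S.f_sum_smul _ _
  have hfA : ∀ i ∈ A, S.f i x = a i := fun i hi => by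
    rw [hf, if_pos (Finset.mem_union_left _ hi), hcA i hi]
  have hfB : ∀ i ∈ B, S.f i x = t := fun i hi => by
    rw [hf, if_pos (Finset.mem_union_right _ hi), hcB i hi]
  have hPA : S.P A x = ∑ i ∈ A, a i • S.e i :=
    Finset.sum_congr rfl fun i hi => by rw [hfA i hi]
  have hPB : S.P B x = t • S.ind B := by
    rw [ind, Finset.smul_sum]
    exact Finset.sum_congr rfl fun i hi => by rw [hfB i hi]
  have hx : x = S.P A x + S.P B x := by
    rw [P, P, ← Finset.sum_union hAB]
    exact Finset.sum_congr rfl fun i hi => by rw [hf, if_pos hi]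
  obtain ⟨ρ, hρ, hG⟩ := S.exists_isGreedyOrdering_G_eq_P x A B hAB t
    (fun n hn => by by_contra h; exact hn (by rw [hf, if_neg h]))
    (fun i hi => by rw [hfA i hi]; exact ha i hi)
    (fun i hi => by rw [hfB i hi, abs_of_nonneg ht])
  have key := hC x ρ A.card B hρ hcard
  rwa [hG, sub_eq_of_eq_add' hx, sub_eq_of_eq_add hx, hPA, hPB, norm_smul, Real.norm_eq_abs,
    abs_of_nonneg ht] at key

/-- Removes the disjointness assumption by comparing both sides with a third set of indices. -/
theorem mul_norm_ind_le (S : SchauderBasisSys X) {C : ℝ} (hC₀ : 0 ≤ C)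
    (hC : ∀ (x : X) (ρ : ℕ → ℕ) (m : ℕ) (A : Finset ℕ), S.IsGreedyOrdering x ρ →
      A.card ≤ m → ‖x - S.G x ρ m‖ ≤ C * ‖x - S.P A x‖)
    {A B : Finset ℕ} (hcard : B.card ≤ A.card) {t : ℝ} (ht : 0 ≤ t)
    {a : ℕ → ℝ} (ha : ∀ i ∈ A, t ≤ |a i|) :
    t * ‖S.ind B‖ ≤ C ^ 2 * ‖∑ i ∈ A, a i • S.e i‖ := by
  obtain ⟨D, hD, hDcard⟩ := (A ∪ B).finite_toSet.infinite_compl.exists_subset_card_eq A.card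
  have hAD : Disjoint A D := Finset.disjoint_right.2 fun i hi hiA =>
    hD hi (Finset.mem_union_left _ hiA)
  have hDB : Disjoint D B := Finset.disjoint_left.2 fun i hi hiB =>
    hD hi (Finset.mem_union_right _ hiB)
  have hBD : ‖S.ind B‖ ≤ C * ‖S.ind D‖ := by
    simpa [ind] using S.mul_norm_ind_le_of_disjoint hC hDB (hDcard ▸ hcard) zero_le_one
      (a := fun _ => 1) (fun _ _ => by simp)
  calc t * ‖S.ind B‖ ≤ t * (C * ‖S.ind D‖) := by gcongr
    _ = C * (t * ‖S.ind D‖) := by ring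
    _ ≤ C * (C * ‖∑ i ∈ A, a i • S.e i‖) :=
      mul_le_mul_of_nonneg_left (S.mul_norm_ind_le_of_disjoint hC hAD hDcard.le ht ha) hC₀
    _ = C ^ 2 * ‖∑ i ∈ A, a i • S.e i‖ := by ring

end SchauderBasisSys

/-- If a Schauder basis of a real Banach space is almost greedy, then
there is a constant `C` such that `φ(|A|) · min_{i ∈ A} |a_i| ≤ C ‖∑_{i ∈ A} a_i e_i‖`
for every nonempty finite set `A` and all real scalars `(a_i)`. -/
theorem stmt_16 {X : Type*} [NormedAddCommGroup X] [NormedSpace ℝ X] [CompleteSpace X]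
    (S : SchauderBasisSys X) (hAG : S.AlmostGreedy) :
    ∃ C : ℝ, ∀ (A : Finset ℕ) (hA : A.Nonempty) (a : ℕ → ℝ),
      fundFun S A.card * A.inf' hA (fun i => |a i|) ≤ C * ‖∑ i ∈ A, a i • S.e i‖ := by
  obtain ⟨C, hC⟩ := hAG
  have hC' : ∀ (x : X) (ρ : ℕ → ℕ) (m : ℕ) (A : Finset ℕ), S.IsGreedyOrdering x ρ →
      A.card ≤ m → ‖x - S.G x ρ m‖ ≤ |C| * ‖x - S.P A x‖ := fun x ρ m A hρ hm =>
    (hC x ρ m A hρ hm).trans (mul_le_mul_of_nonneg_right (le_abs_self C) (norm_nonneg _))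
  refine ⟨|C| ^ 2, fun A hA a => ?_⟩
  have ht : 0 ≤ A.inf' hA (fun i => |a i|) := Finset.le_inf' _ _ fun i _ => abs_nonneg (a i)
  rcases ht.eq_or_lt with h0 | hpos
  · rw [← h0, mul_zero]
    positivity
  · rw [← le_div_iff₀ hpos]
    refine csSup_le ⟨_, ∅, by simp, rfl⟩ ?_
    rintro _ ⟨B, hB, rfl⟩
    rw [le_div_iff₀ hpos, mul_comm]
    exact S.mul_norm_ind_le (abs_nonneg C) hC' hB ht fun i hi => Finset.inf'_le _ hi
end
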